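/- Let Z : LC(ℝ) → ℝ be a simple, τ-upper semicontinuous, translation invariant and dually epi-translation invariant valuation that vanishes on indicator functions of closed intervals. Then for every u ∈ LC(ℝ), Z(u) = sup{ limsup_{n→∞} Z(v_n) : v_n ∈ PLQ(ℝ), v_n τ-converges to u }. -/

import Mathlib

open MeasureTheory Filter Topology Pointwise Asymptotics

noncomputable section

variable {E : Type*} [NormedAddCommGroup E] [NormedSpace ℝ E]

/-- The effective domain of an extended-real-valued function. -/
def edom (u : E → EReal) : Set E := {x | u x < ⊤}

/-- `u` has Lipschitz constant `L` on the interior of its domain. -/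
def LipBound (u : E → EReal) (L : ℝ) : Prop :=
  ∀ x ∈ interior (edom u), ∀ y ∈ interior (edom u),
    |(u x).toReal - (u y).toReal| ≤ L * ‖x - y‖

/-- Membership in `LC`: proper, lower semicontinuous, convex, compact domain,
Lipschitz on the interior of the domain. -/
def IsLC (u : E → EReal) : Prop :=
  (∀ x y : E, ∀ t : ℝ, 0 < t → t < 1 →
      u (t • x + (1 - t) • y) ≤ (t : EReal) * u x + ((1 - t : ℝ) : EReal) * u y) ∧
  LowerSemicontinuous u ∧
  (∀ x, u x ≠ ⊥) ∧
  (∃ x, u x ≠ ⊤) ∧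
  IsCompact (edom u) ∧
  (∃ L : ℝ, 0 < L ∧ LipBound u L)

/-- τ-convergence: epi-convergence together with uniformly bounded Lipschitz constants. -/
def TauConv (uk : ℕ → E → EReal) (u : E → EReal) : Prop :=
  (∀ k, IsLC (uk k)) ∧ IsLC u ∧
  (∀ (x : E) (xk : ℕ → E), Tendsto xk atTop (𝓝 x) →
      u x ≤ liminf (fun k => uk k (xk k)) atTop) ∧
  (∀ x : E, ∃ xk : ℕ → E, Tendsto xk atTop (𝓝 x) ∧
      Tendsto (fun k => uk k (xk k)) atTop (𝓝 (u x))) ∧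
  (∃ M : ℝ, 0 < M ∧ ∀ k, LipBound (uk k) M)

/-- Valuation property on `LC`. -/
def IsVal (Z : (E → EReal) → ℝ) : Prop :=
  ∀ u v : E → EReal, IsLC u → IsLC v → IsLC (fun x => min (u x) (v x)) →
    Z (fun x => min (u x) (v x)) + Z (fun x => max (u x) (v x)) = Z u + Z v

/-- τ-upper semicontinuity. -/
def TauUSC (Z : (E → EReal) → ℝ) : Prop :=
  ∀ (uk : ℕ → E → EReal) (u : E → EReal), TauConv uk u →
    limsup (fun k => Z (uk k)) atTop ≤ Z u

/-- τ-continuity. -/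
def TauCont (Z : (E → EReal) → ℝ) : Prop :=
  ∀ (uk : ℕ → E → EReal) (u : E → EReal), TauConv uk u →
    Tendsto (fun k => Z (uk k)) atTop (𝓝 (Z u))

/-- Translation invariance. -/
def TransInv (Z : (E → EReal) → ℝ) : Prop :=
  ∀ u : E → EReal, IsLC u → ∀ y : E, Z (fun x => u (x - y)) = Z u

/-- Dual epi-translation invariance. -/
def DualTransInv (Z : (E → EReal) → ℝ) : Prop :=
  ∀ u : E → EReal, IsLC u → ∀ (l : E →ₗ[ℝ] ℝ) (c : ℝ),
    Z (fun x => u x + ((l x + c : ℝ) : EReal)) = Z u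

/-- SL_n invariance. -/
def SLInv (Z : (E → EReal) → ℝ) : Prop :=
  ∀ u : E → EReal, IsLC u → ∀ φ : E →ₗ[ℝ] E, LinearMap.det φ = 1 →
    Z (fun x => u (φ x)) = Z u

/-- The class `Conc`. -/
def IsConc (ζ : ℝ → ℝ) : Prop :=
  (∀ t ∈ Set.Ici (0 : ℝ), 0 ≤ ζ t) ∧ ConcaveOn ℝ (Set.Ici 0) ζ ∧
  Tendsto ζ (𝓝[>] 0) (𝓝 0) ∧
  Tendsto (fun t => ζ t / t) atTop (𝓝 0)

open Classical in
/-- `(∞-valued) indicator function` of a set. -/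
noncomputable def eIndicator (K : Set E) : E → EReal := fun x =>
  if x ∈ K then (0 : EReal) else ⊤

/-- Real part of an extended-real-valued function. -/
def toRealFn (u : E → EReal) : E → ℝ := fun x => (u x).toReal

open Classical in
/-- Second derivative of `u`, set to `0` where `u` is not twice differentiable. -/
noncomputable def secondDeriv (u : ℝ → EReal) : ℝ → ℝ := fun x =>
  if DifferentiableAt ℝ (toRealFn u) x ∧ DifferentiableAt ℝ (deriv (toRealFn u)) x
  then deriv (deriv (toRealFn u)) x
  else 0

/-- Membership in `PLQ(ℝ)`: the domain is a finite union of closed intervals on each of which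
`u` is a quadratic or affine function. -/
def IsPLQ (u : ℝ → EReal) : Prop :=
  IsLC u ∧
  ∃ (l : ℕ) (a b : Fin (l + 1) → ℝ),
    (∀ i, a i ≤ b i) ∧
    edom u = ⋃ i, Set.Icc (a i) (b i) ∧
    ∀ i, ∃ p q r : ℝ, ∀ x ∈ Set.Icc (a i) (b i),
      (u x).toReal = p * x ^ 2 + q * x + r

/-! ### Truncated real functions -/

/-- The function equal to `f` on `[a, b]` and `⊤` outside. -/
def Fn (a b : ℝ) (f : ℝ → ℝ) : ℝ → EReal := fun x =>
  if a ≤ x ∧ x ≤ b then ((f x : ℝ) : EReal) else ⊤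

/-- `f` has at each point of `[a, b]` a subgradient lying in `[m, M]`. -/
def HasSub (a b m M : ℝ) (f : ℝ → ℝ) : Prop :=
  ∀ x, a ≤ x → x ≤ b → ∃ s, m ≤ s ∧ s ≤ M ∧ ∀ y, a ≤ y → y ≤ b → f x + s * (y - x) ≤ f y

lemma Fn_in {a b x : ℝ} (f : ℝ → ℝ) (h1 : a ≤ x) (h2 : x ≤ b) : Fn a b f x = (f x : ℝ) := by
  simp [Fn, h1, h2]

lemma Fn_out {a b x : ℝ} (f : ℝ → ℝ) (h : ¬ (a ≤ x ∧ x ≤ b)) : Fn a b f x = ⊤ := by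
  simp only [Fn, if_neg h]

lemma Fn_congr {a b : ℝ} {f g : ℝ → ℝ} (h : ∀ x, a ≤ x → x ≤ b → f x = g x) :
    Fn a b f = Fn a b g := by
  funext x
  by_cases hx : a ≤ x ∧ x ≤ b
  · rw [Fn_in f hx.1 hx.2, Fn_in g hx.1 hx.2, h x hx.1 hx.2]
  · rw [Fn_out f hx, Fn_out g hx]

lemma le_Fn (a b : ℝ) (f : ℝ → ℝ) (x : ℝ) : ((f x : ℝ) : EReal) ≤ Fn a b f x := by
  by_cases hx : a ≤ x ∧ x ≤ b
  · rw [Fn_in f hx.1 hx.2]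
  · rw [Fn_out f hx]; exact le_top

lemma edom_Fn (a b : ℝ) (f : ℝ → ℝ) : edom (Fn a b f) = Set.Icc a b := by
  ext x
  by_cases hx : a ≤ x ∧ x ≤ b
  · simp only [edom, Set.mem_ofPred_eq, Fn_in f hx.1 hx.2, Set.mem_Icc, hx, and_self, iff_true]
    exact EReal.coe_lt_top _
  · simp only [edom, Set.mem_ofPred_eq, Fn_out f hx, Set.mem_Icc, hx, lt_irrefl]

lemma HasSub.mono {a b m M a' b' m' M' : ℝ} {f : ℝ → ℝ} (h : HasSub a b m M f)
    (ha : a ≤ a') (hb : b' ≤ b) (hm : m' ≤ m) (hM : M ≤ M') : HasSub a' b' m' M' f := by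
  intro x h1 h2
  obtain ⟨s, hs1, hs2, hs⟩ := h x (ha.trans h1) (h2.trans hb)
  exact ⟨s, hm.trans hs1, hs2.trans hM, fun y h3 h4 => hs y (ha.trans h3) (h4.trans hb)⟩

lemma HasSub.bounds {a b m M : ℝ} {f : ℝ → ℝ} (h : HasSub a b m M f) {x y : ℝ} (h1 : a ≤ x)
    (h2 : x ≤ y) (h3 : y ≤ b) : m * (y - x) ≤ f y - f x ∧ f y - f x ≤ M * (y - x) := by
  obtain ⟨s, hs1, hs2, hs⟩ := h x h1 (h2.trans h3)
  obtain ⟨r, hr1, hr2, hr⟩ := h y (h1.trans h2) h3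
  have e1 := hs y (h1.trans h2) h3
  have e2 := hr x h1 (h2.trans h3)
  constructor <;> nlinarith

lemma HasSub.lip {a b m M K : ℝ} {f : ℝ → ℝ} (h : HasSub a b m M f) (hK1 : -K ≤ m) (hK2 : M ≤ K) :
    LipBound (Fn a b f) K := by
  intro x hx y hy
  have hx := interior_subset hx
  have hy := interior_subset hy
  rw [edom_Fn] at hx hy
  rw [Fn_in f hx.1 hx.2, Fn_in f hy.1 hy.2, EReal.toReal_coe, EReal.toReal_coe, Real.norm_eq_abs]
  rcases le_total x y with hxy | hxy
  · have := h.bounds hx.1 hxy hy.2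
    rw [abs_sub_comm, abs_sub_comm x y, abs_of_nonneg (sub_nonneg.2 hxy), abs_le]
    constructor <;> nlinarith
  · have := h.bounds hy.1 hxy hx.2
    rw [abs_of_nonneg (sub_nonneg.2 hxy), abs_le]
    constructor <;> nlinarith

lemma HasSub.isLC {a b m M : ℝ} {f : ℝ → ℝ} (h : HasSub a b m M f) (hab : a ≤ b)
    (hf : Continuous f) : IsLC (Fn a b f) := by
  refine ⟨?_, ?_, ?_, ?_, ?_, ?_⟩
  · intro x y t ht0 ht1
    have ht1' : 0 < 1 - t := by linarith
    have hne : ∀ (s : ℝ) (z : ℝ), 0 < s → (s : EReal) * Fn a b f z ≠ ⊥ := by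
      intro s z hs
      by_cases hz : a ≤ z ∧ z ≤ b
      · rw [Fn_in f hz.1 hz.2, ← EReal.coe_mul]; exact EReal.coe_ne_bot _
      · rw [Fn_out f hz, EReal.coe_mul_top_of_pos hs]; exact top_ne_bot
    by_cases hx : a ≤ x ∧ x ≤ b
    · by_cases hy : a ≤ y ∧ y ≤ b
      · have hz1 : a ≤ t • x + (1 - t) • y := by simp only [smul_eq_mul]; nlinarith
        have hz2 : t • x + (1 - t) • y ≤ b := by simp only [smul_eq_mul]; nlinarith
        rw [Fn_in f hz1 hz2, Fn_in f hx.1 hx.2, Fn_in f hy.1 hy.2, ← EReal.coe_mul,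
          ← EReal.coe_mul, ← EReal.coe_add, EReal.coe_le_coe_iff]
        obtain ⟨s, -, -, hs⟩ := h _ hz1 hz2
        have e1 := hs x hx.1 hx.2
        have e2 := hs y hy.1 hy.2
        simp only [smul_eq_mul] at *
        generalize f (t * x + (1 - t) * y) = w at *
        nlinarith [mul_le_mul_of_nonneg_left e1 ht0.le, mul_le_mul_of_nonneg_left e2 ht1'.le]
      · rw [Fn_out f hy, EReal.coe_mul_top_of_pos ht1', EReal.add_top_of_ne_bot (hne _ _ ht0)]
        exact le_top
    · rw [Fn_out f hx, EReal.coe_mul_top_of_pos ht0, EReal.top_add_of_ne_bot (hne _ _ ht1')]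
      exact le_top
  · intro x y hy
    by_cases hx : a ≤ x ∧ x ≤ b
    · rw [Fn_in f hx.1 hx.2] at hy
      have hc : Continuous (fun x => ((f x : ℝ) : EReal)) := continuous_coe_real_ereal.comp hf
      filter_upwards [hc.continuousAt.eventually (lt_mem_nhds hy)] with z hz
      exact lt_of_lt_of_le hz (le_Fn _ _ _ _)
    · have : ∀ᶠ z in 𝓝 x, z ∉ Set.Icc a b := isClosed_Icc.isOpen_compl.mem_nhds hx
      rw [Fn_out f hx] at hy
      filter_upwards [this] with z hz
      rw [Fn_out f hz]; exact hy
  · intro x hx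
    have := le_Fn a b f x
    rw [hx] at this
    exact EReal.coe_ne_bot _ (le_bot_iff.1 this)
  · exact ⟨a, by rw [Fn_in f le_rfl hab]; exact EReal.coe_ne_top _⟩
  · rw [edom_Fn]; exact isCompact_Icc
  · refine ⟨max (max M (-m)) 1, by positivity, h.lip ?_ ?_⟩
    · have := le_max_right M (-m)
      have := le_max_left (max M (-m)) 1
      linarith
    · exact (le_max_left _ _).trans (le_max_left _ _)

lemma tau_of {a b : ℕ → ℝ} {f : ℕ → ℝ → ℝ} {a0 b0 : ℝ} {g : ℝ → ℝ} (hab : ∀ k, a k ≤ b k)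
    (ha : Tendsto a atTop (𝓝 a0)) (hb : Tendsto b atTop (𝓝 b0)) (hg : Continuous g)
    {e : ℕ → ℝ} (he : Tendsto e atTop (𝓝 0))
    (hfe : ∀ k x, a k ≤ x → x ≤ b k → |f k x - g x| ≤ e k)
    (hLC : ∀ k, IsLC (Fn (a k) (b k) (f k))) (hLC0 : IsLC (Fn a0 b0 g))
    {M : ℝ} (hM : ∀ k, LipBound (Fn (a k) (b k) (f k)) M) :
    TauConv (fun k => Fn (a k) (b k) (f k)) (Fn a0 b0 g) := by
  have hout : ∀ (x : ℝ) (xk : ℕ → ℝ), Tendsto xk atTop (𝓝 x) → ¬ (a0 ≤ x ∧ x ≤ b0) →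
      ∀ᶠ k in atTop, (⊤ : EReal) = Fn (a k) (b k) (f k) (xk k) := by
    intro x xk hx hn
    rw [not_and_or, not_le, not_le] at hn
    rcases hn with hn | hn
    · filter_upwards [hx.eventually_lt ha hn] with k hk
      rw [Fn_out]; rintro ⟨h, -⟩; linarith
    · filter_upwards [hb.eventually_lt hx hn] with k hk
      rw [Fn_out]; rintro ⟨-, h⟩; linarith
  refine ⟨hLC, hLC0, ?_, ?_, max M 1, by positivity, fun k x hx y hy => ?_⟩
  · intro x xk hx
    by_cases hin : a0 ≤ x ∧ x ≤ b0
    · rw [Fn_in g hin.1 hin.2]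
      have h1 : Tendsto (fun k => ((g (xk k) - e k : ℝ) : EReal)) atTop (𝓝 ((g x : ℝ) : EReal)) := by
        have : Tendsto (fun k => g (xk k) - e k) atTop (𝓝 (g x - 0)) :=
          ((hg.tendsto x).comp hx).sub he
        rw [sub_zero] at this
        exact (continuous_coe_real_ereal.tendsto _).comp this
      rw [← h1.liminf_eq]
      refine liminf_le_liminf (Eventually.of_forall fun k => ?_)
      show _ ≤ Fn (a k) (b k) (f k) (xk k)
      by_cases hk : a k ≤ xk k ∧ xk k ≤ b k
      · rw [Fn_in _ hk.1 hk.2, EReal.coe_le_coe_iff]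
        have := (abs_le.1 (hfe k _ hk.1 hk.2)).1
        linarith
      · rw [Fn_out _ hk]; exact le_top
    · have : Tendsto (fun k => Fn (a k) (b k) (f k) (xk k)) atTop (𝓝 ⊤) :=
        tendsto_const_nhds.congr' (hout x xk hx hin)
      rw [this.liminf_eq]; exact le_top
  · intro x
    by_cases hin : a0 ≤ x ∧ x ≤ b0
    · have hxk : Tendsto (fun k => max (a k) (min x (b k))) atTop (𝓝 x) := by
        have := ha.max ((tendsto_const_nhds (x := x)).min hb)
        rwa [min_eq_left hin.2, max_eq_right hin.1] at this
      refine ⟨_, hxk, ?_⟩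
      have hk1 : ∀ k, a k ≤ max (a k) (min x (b k)) := fun k => le_max_left _ _
      have hk2 : ∀ k, max (a k) (min x (b k)) ≤ b k := fun k => max_le (hab k) (min_le_right _ _)
      rw [Fn_in g hin.1 hin.2]
      simp only [Fn_in _ (hk1 _) (hk2 _)]
      refine (continuous_coe_real_ereal.tendsto _).comp ?_
      have h1 : Tendsto (fun k => f k (max (a k) (min x (b k))) - g (max (a k) (min x (b k))))
          atTop (𝓝 0) := squeeze_zero_norm (fun k => hfe k _ (hk1 k) (hk2 k)) he
      have h2 := h1.add ((hg.tendsto x).comp hxk)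
      simpa using h2
    · refine ⟨fun _ => x, tendsto_const_nhds, ?_⟩
      rw [Fn_out g hin]
      exact tendsto_const_nhds.congr' (hout x (fun _ => x) tendsto_const_nhds hin)
  · exact (hM k x hx y hy).trans (mul_le_mul_of_nonneg_right (le_max_left _ _) (norm_nonneg _))

/-- The hypotheses on the valuation. -/
structure GoodVal (Z : (ℝ → EReal) → ℝ) : Prop where
  hval : IsVal Z
  husc : TauUSC Z
  htrans : TransInv Z
  hdual : DualTransInv Z
  hsimple : ∀ u : ℝ → EReal, IsLC u → (∃ x : ℝ, edom u = {x}) → Z u = 0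
  hvanish : ∀ a b : ℝ, a ≤ b → Z (eIndicator (Set.Icc a b)) = 0

lemma GoodVal.point {Z : (ℝ → EReal) → ℝ} (hZ : GoodVal Z) (c : ℝ) (f : ℝ → ℝ) :
    Z (Fn c c f) = 0 := by
  have h : Fn c c f = Fn c c (fun _ => f c) := Fn_congr fun x h1 h2 => by
    rw [le_antisymm h2 h1]
  rw [h]
  refine hZ.hsimple _ (HasSub.isLC (m := 0) (M := 0) ?_ le_rfl continuous_const) ⟨c, ?_⟩
  · intro x _ _; exact ⟨0, le_rfl, le_rfl, fun y _ _ => by simp⟩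
  · rw [edom_Fn, Set.Icc_self]

lemma GoodVal.add {Z : (ℝ → EReal) → ℝ} (hZ : GoodVal Z) {a b c m M : ℝ} {f : ℝ → ℝ}
    (h : HasSub a b m M f) (hf : Continuous f) (hac : a ≤ c) (hcb : c ≤ b) :
    Z (Fn a b f) = Z (Fn a c f) + Z (Fn c b f) := by
  have hmin : (fun x => min (Fn a c f x) (Fn c b f x)) = Fn a b f := by
    funext x
    by_cases h1 : a ≤ x ∧ x ≤ c
    · by_cases h2 : c ≤ x ∧ x ≤ b
      · rw [Fn_in f h1.1 h1.2, Fn_in f h2.1 h2.2, Fn_in f h1.1 h2.2, min_self]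
      · rw [Fn_in f h1.1 h1.2, Fn_out f h2, Fn_in f h1.1 (h1.2.trans hcb)]; exact min_top_right _
    · by_cases h2 : c ≤ x ∧ x ≤ b
      · rw [Fn_out f h1, Fn_in f h2.1 h2.2, Fn_in f (hac.trans h2.1) h2.2]; exact min_top_left _
      · rw [Fn_out f h1, Fn_out f h2, Fn_out f, min_self]
        rintro ⟨h3, h4⟩
        rcases le_total x c with h5 | h5
        · exact h1 ⟨h3, h5⟩
        · exact h2 ⟨h5, h4⟩
  have hmax : (fun x => max (Fn a c f x) (Fn c b f x)) = Fn c c f := by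
    funext x
    by_cases h1 : a ≤ x ∧ x ≤ c
    · by_cases h2 : c ≤ x ∧ x ≤ b
      · rw [Fn_in f h1.1 h1.2, Fn_in f h2.1 h2.2, Fn_in f h2.1 h1.2, max_self]
      · rw [Fn_out f h2, Fn_out f (a := c) (b := c), max_top_right]
        rintro ⟨h3, h4⟩
        exact h2 ⟨h3, h4.trans hcb⟩
    · rw [Fn_out f h1, Fn_out f (a := c) (b := c), max_top_left]
      rintro ⟨h3, h4⟩
      exact h1 ⟨hac.trans h3, h4⟩
  have key := hZ.hval (Fn a c f) (Fn c b f)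
    ((h.mono le_rfl hcb le_rfl le_rfl).isLC hac hf) ((h.mono hac le_rfl le_rfl le_rfl).isLC hcb hf)
    (by rw [hmin]; exact h.isLC (hac.trans hcb) hf)
  rw [hmin, hmax, hZ.point, add_zero] at key
  exact key

lemma HasSub.affine {a b m M : ℝ} {f : ℝ → ℝ} (h : HasSub a b m M f) (y k c : ℝ) :
    HasSub (a + y) (b + y) (m + k) (M + k) (fun x => f (x - y) + k * x + c) := by
  intro x h1 h2
  obtain ⟨s, hs1, hs2, hs⟩ := h (x - y) (by linarith) (by linarith)
  refine ⟨s + k, by linarith, by linarith, fun z h3 h4 => ?_⟩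
  have := hs (z - y) (by linarith) (by linarith)
  linarith

lemma GoodVal.affine {Z : (ℝ → EReal) → ℝ} (hZ : GoodVal Z) {a b m M : ℝ} {f : ℝ → ℝ}
    (h : HasSub a b m M f) (hf : Continuous f) (hab : a ≤ b) (y k c : ℝ) :
    Z (Fn (a + y) (b + y) (fun x => f (x - y) + k * x + c)) = Z (Fn a b f) := by
  have h1 : (fun x => Fn a b f (x - y)) = Fn (a + y) (b + y) (fun x => f (x - y)) := by
    funext x
    by_cases hx : a ≤ x - y ∧ x - y ≤ b
    · rw [Fn_in f hx.1 hx.2, Fn_in _ (by linarith) (by linarith)]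
    · rw [Fn_out f hx, Fn_out]
      rintro ⟨h3, h4⟩; exact hx ⟨by linarith, by linarith⟩
  have h2 := hZ.htrans _ (h.isLC hab hf) y
  rw [h1] at h2
  have h3 := h.affine y 0 0
  simp only [add_zero, zero_mul] at h3
  have h4 := hZ.hdual _ (h3.isLC (by linarith) (by fun_prop)) (k • LinearMap.id) c
  rw [← h2, ← h4]
  congr 1
  funext x
  by_cases hx : a + y ≤ x ∧ x ≤ b + y
  · rw [Fn_in _ hx.1 hx.2, Fn_in _ hx.1 hx.2, ← EReal.coe_add]
    simp [add_assoc]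
  · rw [Fn_out _ hx, Fn_out _ hx, EReal.top_add_coe]

/-! ### Pieces -/

/-- A exists_pieced convex function on `[0, L]` with slopes in `[0, A]`. -/
structure Piece where
  L : ℝ
  A : ℝ
  f : ℝ → ℝ
  hL : 0 ≤ L
  hA : 0 ≤ A
  hf : Continuous f
  h0 : f 0 = 0
  hs : HasSub 0 L 0 A f

/-- The extended-real-valued function attached to a piece. -/
def Piece.u (P : Piece) : ℝ → EReal := Fn 0 P.L P.f

lemma Piece.isLC (P : Piece) : IsLC P.u := P.hs.isLC P.hL P.hf

lemma Piece.nonneg (P : Piece) {x : ℝ} (h1 : 0 ≤ x) (h2 : x ≤ P.L) : 0 ≤ P.f x := by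
  have := (P.hs.bounds le_rfl h1 h2).1
  rw [P.h0] at this; linarith

lemma Piece.le (P : Piece) {x : ℝ} (h1 : 0 ≤ x) (h2 : x ≤ P.L) : P.f x ≤ P.A * P.L := by
  have := (P.hs.bounds le_rfl h1 h2).2
  rw [P.h0] at this
  have := mul_le_mul_of_nonneg_left h2 P.hA
  linarith

/-- Zero piece. -/
def zeroPiece (L A : ℝ) (hL : 0 ≤ L) (hA : 0 ≤ A) : Piece where
  L := L
  A := A
  f := fun _ => 0
  hL := hL
  hA := hA
  hf := continuous_const
  h0 := rfl
  hs := fun x _ _ => ⟨0, le_rfl, hA, fun y _ _ => by simp⟩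

/-- Quadratic piece. -/
def quadPiece (t L : ℝ) (ht : 0 ≤ t) (hL : 0 ≤ L) : Piece where
  L := L
  A := t * L
  f := fun x => t * x ^ 2 / 2
  hL := hL
  hA := mul_nonneg ht hL
  hf := by fun_prop
  h0 := by simp
  hs := fun x h1 h2 => ⟨t * x, mul_nonneg ht h1, mul_le_mul_of_nonneg_left h2 ht,
    fun y _ _ => by nlinarith [mul_nonneg ht (sq_nonneg (y - x))]⟩

/-- Concatenation of pieces. -/
def Piece.concat (P Q : Piece) : Piece where
  L := P.L + Q.L
  A := P.A + Q.A
  f := fun x => P.f (min x P.L) + P.A * max (x - P.L) 0 + Q.f (max (x - P.L) 0)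
  hL := add_nonneg P.hL Q.hL
  hA := add_nonneg P.hA Q.hA
  hf := by
    have := P.hf
    have := Q.hf
    fun_prop
  h0 := by
    have h := P.hL
    simp [h, P.h0, Q.h0]
  hs := by
    have hfl : ∀ x, x ≤ P.L → P.f (min x P.L) + P.A * max (x - P.L) 0 + Q.f (max (x - P.L) 0)
        = P.f x := by
      intro x hx
      rw [min_eq_left hx, max_eq_right (by linarith), Q.h0]; ring
    have hfr : ∀ x, P.L ≤ x → P.f (min x P.L) + P.A * max (x - P.L) 0 + Q.f (max (x - P.L) 0)
        = P.f P.L + P.A * (x - P.L) + Q.f (x - P.L) := by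
      intro x hx
      rw [min_eq_right hx, max_eq_left (by linarith)]
    have hP := P.hL
    have hQ := Q.hL
    intro x h1 h2
    rcases le_or_gt x P.L with hx | hx
    · obtain ⟨s, hs1, hs2, hs⟩ := P.hs x h1 hx
      have hQA := Q.hA
      refine ⟨s, hs1, by linarith, fun y h3 h4 => ?_⟩
      beta_reduce
      rw [hfl x hx]
      rcases le_total y P.L with hy | hy
      · rw [hfl y hy]; exact hs y h3 hy
      · rw [hfr y hy]
        have e1 := hs P.L hP le_rfl
        have e2 := Q.nonneg (x := y - P.L) (by linarith) (by linarith)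
        nlinarith
    · obtain ⟨s, hs1, hs2, hs⟩ := Q.hs (x - P.L) (by linarith) (by linarith)
      have hPA := P.hA
      refine ⟨P.A + s, by linarith, by linarith, fun y h3 h4 => ?_⟩
      beta_reduce
      rw [hfr x hx.le]
      rcases le_total y P.L with hy | hy
      · rw [hfl y hy]
        have e1 := hs 0 le_rfl hQ
        have e2 := (P.hs.bounds h3 hy le_rfl).2
        rw [Q.h0] at e1
        nlinarith
      · rw [hfr y hy]
        have e1 := hs (y - P.L) (by linarith) (by linarith)
        linarith

lemma Piece.concat_left (P Q : Piece) {x : ℝ} (hx : x ≤ P.L) : (P.concat Q).f x = P.f x := by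
  simp only [Piece.concat]
  rw [min_eq_left hx, max_eq_right (by linarith), Q.h0]; ring

lemma Piece.concat_right (P Q : Piece) {x : ℝ} (hx : P.L ≤ x) :
    (P.concat Q).f x = P.f P.L + P.A * (x - P.L) + Q.f (x - P.L) := by
  simp only [Piece.concat]
  rw [min_eq_right hx, max_eq_left (by linarith)]

section Val

variable {Z : (ℝ → EReal) → ℝ}

lemma GoodVal.concat (hZ : GoodVal Z) (P Q : Piece) : Z (P.concat Q).u = Z P.u + Z Q.u := by
  have h1 := hZ.add (P.concat Q).hs (P.concat Q).hf P.hL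
    (by simp only [Piece.concat]; linarith [Q.hL])
  have h2 : Fn 0 P.L (P.concat Q).f = P.u := Fn_congr fun x _ hx => P.concat_left Q hx
  have h3 := hZ.affine Q.hs Q.hf Q.hL P.L P.A (P.f P.L - P.A * P.L)
  have h4 : Fn P.L (P.concat Q).L (P.concat Q).f
      = Fn (0 + P.L) (Q.L + P.L) (fun x => Q.f (x - P.L) + P.A * x + (P.f P.L - P.A * P.L)) := by
    have : (P.concat Q).L = Q.L + P.L := by simp only [Piece.concat]; ring
    rw [this, zero_add]
    refine Fn_congr fun x hx _ => ?_
    rw [P.concat_right Q hx]; ring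
  rw [h2, h4, h3] at h1
  exact h1

lemma exists_piece {a b m M : ℝ} {f : ℝ → ℝ} (h : HasSub a b m M f) (hab : a ≤ b)
    (hmM : m ≤ M) (hf : Continuous f) : ∃ P : Piece, P.L = b - a ∧ P.A = M - m ∧
      (∀ x, P.f x = f (x + a) - f a - m * x) ∧
      ∀ {Z : (ℝ → EReal) → ℝ}, GoodVal Z → Z P.u = Z (Fn a b f) := by
  have h1 := h.affine (-a) (-m) (-f a)
  refine ⟨⟨b - a, M - m, fun x => f (x + a) - f a - m * x, by linarith, by linarith, by fun_prop,
    by simp, ?_⟩, rfl, rfl, fun x => rfl, ?_⟩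
  · convert h1 using 2 <;> ring_nf
  · intro Z hZ
    rw [← hZ.affine h hf hab (-a) (-m) (-f a)]
    unfold Piece.u
    congr 2
    · simp
    · ext x; ring_nf

lemma Piece.split (P : Piece) {s : ℝ} (h1 : 0 ≤ s) (h2 : s ≤ P.L) : ∃ P1 P2 : Piece,
    P1.L = s ∧ P2.L = P.L - s ∧ P1.A + P2.A = P.A ∧ P1.f = P.f ∧
    ∀ x, (P1.concat P2).f x = P.f x := by
  obtain ⟨σ, hσ1, hσ2, hσ⟩ := P.hs s h1 h2
  have hl : HasSub 0 s 0 σ P.f := by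
    intro x hx1 hx2
    obtain ⟨r, hr1, hr2, hr⟩ := P.hs x hx1 (hx2.trans h2)
    rcases eq_or_lt_of_le hx2 with rfl | hlt
    · exact ⟨σ, hσ1, le_rfl, fun y h3 h4 => hσ y h3 (h4.trans h2)⟩
    · refine ⟨r, hr1, ?_, fun y h3 h4 => hr y h3 (h4.trans h2)⟩
      have e1 := hr s h1 h2
      have e2 := hσ x hx1 (hx2.trans h2)
      by_contra hc
      push Not at hc
      nlinarith
  have hr : HasSub s P.L σ P.A P.f := by
    intro x hx1 hx2
    obtain ⟨r, hr1, hr2, hr⟩ := P.hs x (h1.trans hx1) hx2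
    rcases eq_or_lt_of_le hx1 with rfl | hlt
    · exact ⟨σ, le_rfl, hσ2, fun y h3 h4 => hσ y (h1.trans h3) h4⟩
    · refine ⟨r, ?_, hr2, fun y h3 h4 => hr y (h1.trans h3) h4⟩
      have e1 := hr s h1 h2
      have e2 := hσ x (h1.trans hx1) hx2
      by_contra hc
      push Not at hc
      nlinarith
  obtain ⟨P2, e1, e2, e3, -⟩ := exists_piece hr h2 hσ2 P.hf
  refine ⟨⟨s, σ, P.f, h1, hσ1, P.hf, P.h0, hl⟩, P2, rfl, e1, by rw [e2]; simp, rfl, fun x => ?_⟩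
  rcases le_total x s with hx | hx
  · exact Piece.concat_left _ _ hx
  · rw [Piece.concat_right _ _ hx, e3]
    simp

lemma Piece.u_congr {P Q : Piece} (h : P.L = Q.L) (hf : ∀ x, 0 ≤ x → x ≤ P.L → P.f x = Q.f x) :
    P.u = Q.u := by
  unfold Piece.u
  rw [← h]
  exact Fn_congr hf

lemma GoodVal.zero (hZ : GoodVal Z) (L A : ℝ) (hL : 0 ≤ L) (hA : 0 ≤ A) :
    Z (zeroPiece L A hL hA).u = 0 := by
  rw [← hZ.hvanish 0 L hL]
  congr 1
  funext x
  by_cases hx : 0 ≤ x ∧ x ≤ L <;> simp [zeroPiece, Piece.u, Fn, eIndicator, hx]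

lemma concat_dist {P1 P2 Q1 Q2 : Piece} {e1 e2 : ℝ} (hL1 : Q1.L = P1.L)
    (hA1 : Q1.A = P1.A) (h1 : ∀ x, 0 ≤ x → x ≤ P1.L → |Q1.f x - P1.f x| ≤ e1)
    (h2 : ∀ x, 0 ≤ x → x ≤ P2.L → |Q2.f x - P2.f x| ≤ e2) :
    ∀ x, 0 ≤ x → x ≤ P1.L + P2.L → |(Q1.concat Q2).f x - (P1.concat P2).f x| ≤ e1 + e2 := by
  intro x hx1 hx2
  rcases le_total x P1.L with hx | hx
  · rw [Piece.concat_left _ _ hx, Piece.concat_left _ _ (hx.trans hL1.ge)]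
    have := h1 x hx1 hx
    have := (abs_nonneg _).trans (h2 0 le_rfl P2.hL)
    linarith
  · rw [Piece.concat_right _ _ hx, Piece.concat_right _ _ (hL1.le.trans hx), hL1, hA1]
    have e1 := h1 P1.L P1.hL le_rfl
    have e2 := h2 (x - P1.L) (by linarith) (by linarith)
    rw [abs_le] at *
    constructor <;> linarith [e1.1, e1.2, e2.1, e2.2]

lemma zero_approx (hZ : GoodVal Z) {h : ℝ} (hh : 0 ≤ h) (N : ℕ) : ∀ P : Piece, P.L = N * h →
    ∃ Q : Piece, Q.L = P.L ∧ Q.A = P.A ∧ Z Q.u = 0 ∧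
      ∀ x, 0 ≤ x → x ≤ P.L → |Q.f x - P.f x| ≤ h * P.A := by
  induction N with
  | zero =>
    intro P hP
    refine ⟨zeroPiece P.L P.A P.hL P.hA, rfl, rfl, hZ.zero _ _ _ _, fun x h1 h2 => ?_⟩
    have hx : x = 0 := by rw [hP] at h2; simp at h2; linarith
    subst hx
    simp only [zeroPiece, P.h0, sub_self, abs_zero]
    exact mul_nonneg hh P.hA
  | succ N ih =>
    intro P hP
    push_cast at hP
    obtain ⟨P1, P2, e1, e2, e3, -, e4⟩ := P.split hh (by nlinarith [Nat.cast_nonneg (α := ℝ) N])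
    obtain ⟨Q2, q1, q2, q3, q4⟩ := ih P2 (by rw [e2, hP]; ring)
    refine ⟨(zeroPiece P1.L P1.A P1.hL P1.hA).concat Q2, ?_, ?_, ?_, ?_⟩
    · simp only [Piece.concat, zeroPiece]; rw [q1, e1, e2]; ring
    · simp only [Piece.concat, zeroPiece]; rw [q2, e3]
    · rw [hZ.concat, hZ.zero, q3, add_zero]
    · intro x h1 h2
      have := concat_dist (P1 := P1) (P2 := P2) (Q1 := zeroPiece P1.L P1.A P1.hL P1.hA) (Q2 := Q2)
        (e1 := h * P1.A) (e2 := h * P2.A) rfl rfl ?_ q4 x h1 (by rw [e1, e2]; linarith)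
      · rw [e4] at this
        rw [← e3]; linarith
      · intro y h3 h4
        simp only [zeroPiece, zero_sub, abs_neg]
        rw [abs_of_nonneg (P1.nonneg h3 h4)]
        have := P1.le h3 h4
        rw [e1] at this; linarith

lemma zero_approx' (hZ : GoodVal Z) (P : Piece) {ε : ℝ} (hε : 0 < ε) :
    ∃ Q : Piece, Q.L = P.L ∧ Q.A = P.A ∧ Z Q.u = 0 ∧
      ∀ x, 0 ≤ x → x ≤ P.L → |Q.f x - P.f x| ≤ ε := by
  obtain ⟨N, hN⟩ := exists_nat_gt (P.L * P.A / ε)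
  have hN0 : (0 : ℝ) < N := lt_of_le_of_lt (div_nonneg (mul_nonneg P.hL P.hA) hε.le) hN
  obtain ⟨Q, q1, q2, q3, q4⟩ := zero_approx hZ (h := P.L / N) (div_nonneg P.hL hN0.le) N P
    (by field_simp)
  refine ⟨Q, q1, q2, q3, fun x h1 h2 => (q4 x h1 h2).trans ?_⟩
  rw [div_lt_iff₀ hε] at hN
  rw [div_mul_eq_mul_div, div_le_iff₀ hN0]
  linarith

/-- τ-convergence of pieces. -/
lemma tau_piece {R : ℕ → Piece} {G : Piece} {V : ℝ} (hL : Tendsto (fun k => (R k).L) atTop (𝓝 G.L))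
    (hV : ∀ k, (R k).A ≤ V) {e : ℕ → ℝ} (he : Tendsto e atTop (𝓝 0))
    (hfe : ∀ k x, 0 ≤ x → x ≤ (R k).L → |(R k).f x - G.f x| ≤ e k) :
    TauConv (fun k => (R k).u) G.u :=
  tau_of (a := fun _ => 0) (fun k => (R k).hL) tendsto_const_nhds hL G.hf he hfe
    (fun k => (R k).isLC) G.isLC (M := V)
    (fun k => (R k).hs.lip (by linarith [(R k).hA, hV k]) (hV k))

lemma GoodVal.nonneg (hZ : GoodVal Z) (P : Piece) : 0 ≤ Z P.u := by
  have h : ∀ k : ℕ, (0 : ℝ) < 1 / ((k : ℝ) + 1) := fun k => by positivity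
  choose Q q1 q2 q3 q4 using fun k => zero_approx' hZ P (h k)
  have ht : TauConv (fun k => (Q k).u) P.u := by
    refine tau_piece (V := P.A) ?_ (fun k => (q2 k).le) tendsto_one_div_add_atTop_nhds_zero_nat ?_
    · simp only [q1]; exact tendsto_const_nhds
    · intro k x h1 h2
      exact q4 k x h1 (h2.trans (q1 k).le)
  have := hZ.husc _ _ ht
  simp only [q3] at this
  rwa [limsup_const] at this

lemma GoodVal.nonneg' (hZ : GoodVal Z) {a b m M : ℝ} {f : ℝ → ℝ} (h : HasSub a b m M f)
    (hab : a ≤ b) (hmM : m ≤ M) (hf : Continuous f) : 0 ≤ Z (Fn a b f) := by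
  obtain ⟨P, -, -, -, hP⟩ := exists_piece h hab hmM hf
  rw [← hP hZ]
  exact hZ.nonneg P

lemma GoodVal.cont (hZ : GoodVal Z) (P : Piece) :
    Continuous (fun s => Z (Fn 0 (max 0 (min s P.L)) P.f)) := by
  rw [continuous_iff_continuousAt]
  intro s0
  refine tendsto_of_seq_tendsto fun xk hxk => ?_
  set s := max 0 (min s0 P.L) with hs
  set sk : ℕ → ℝ := fun k => max 0 (min (xk k) P.L) with hsk
  have hlim : Tendsto sk atTop (𝓝 s) :=
    tendsto_const_nhds.max (hxk.min tendsto_const_nhds)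
  have b1 : 0 ≤ s := le_max_left _ _
  have b2 : s ≤ P.L := max_le P.hL (min_le_right _ _)
  have c1 : ∀ k, 0 ≤ sk k := fun k => le_max_left _ _
  have c2 : ∀ k, sk k ≤ P.L := fun k => max_le P.hL (min_le_right _ _)
  show Tendsto (fun k => Z (Fn 0 (sk k) P.f)) atTop (𝓝 (Z (Fn 0 s P.f)))
  set d : ℕ → ℝ := fun k => Z (Fn (min (sk k) s) (max (sk k) s) P.f) with hd
  have m1 : ∀ k, 0 ≤ min (sk k) s := fun k => le_min (c1 k) b1
  have m2 : ∀ k, max (sk k) s ≤ P.L := fun k => max_le (c2 k) b2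
  have m3 : ∀ k, min (sk k) s ≤ max (sk k) s := fun k => min_le_max
  have hsub : ∀ {a b : ℝ}, 0 ≤ a → b ≤ P.L → HasSub a b 0 P.A P.f := fun h1 h2 =>
    P.hs.mono h1 h2 le_rfl le_rfl
  have hd0 : ∀ k, 0 ≤ d k := fun k =>
    hZ.nonneg' (hsub (m1 k) (m2 k)) (m3 k) P.hA P.hf
  have hdiff : ∀ k, |Z (Fn 0 (sk k) P.f) - Z (Fn 0 s P.f)| = d k := by
    intro k
    rcases le_total (sk k) s with h | h
    · have := hZ.add (hsub le_rfl b2) P.hf (c1 k) h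
      have h0 := hd0 k
      simp only [hd, min_eq_left h, max_eq_right h] at *
      rw [abs_sub_comm, abs_of_nonneg] <;> linarith
    · have := hZ.add (hsub le_rfl (c2 k)) P.hf b1 h
      have h0 := hd0 k
      simp only [hd, min_eq_right h, max_eq_left h] at *
      rw [abs_of_nonneg] <;> linarith
  have hdle : ∀ k, d k ≤ Z P.u := by
    intro k
    have e1 := hZ.add P.hs P.hf ((m1 k).trans (m3 k)) (m2 k)
    have e2 := hZ.add (hsub le_rfl (m2 k)) P.hf (m1 k) (m3 k)
    have e3 := hZ.nonneg' (hsub le_rfl ((m3 k).trans (m2 k))) (m1 k) P.hA P.hf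
    have e4 := hZ.nonneg' (hsub ((m1 k).trans (m3 k)) le_rfl) (m2 k) P.hA P.hf
    simp only [hd, Piece.u]
    linarith
  have htau : TauConv (fun k => Fn (min (sk k) s) (max (sk k) s) P.f) (Fn s s P.f) := by
    refine tau_of m3 ?_ ?_ P.hf (e := fun _ => 0) tendsto_const_nhds (fun k x _ _ => by simp)
      (fun k => (hsub (m1 k) (m2 k)).isLC (m3 k) P.hf) ((hsub b1 b2).isLC le_rfl P.hf)
      (M := P.A) (fun k => (hsub (m1 k) (m2 k)).lip (by linarith [P.hA]) le_rfl)
    · simpa using hlim.min (tendsto_const_nhds (x := s))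
    · simpa using hlim.max (tendsto_const_nhds (x := s))
  have hls := hZ.husc _ _ htau
  rw [hZ.point] at hls
  have hdt : Tendsto d atTop (𝓝 0) := by
    have hb1 : IsBoundedUnder (· ≤ ·) atTop d := isBoundedUnder_of ⟨_, hdle⟩
    have hb2 : IsBoundedUnder (· ≥ ·) atTop d := isBoundedUnder_of ⟨0, hd0⟩
    refine tendsto_of_le_liminf_of_limsup_le ?_ hls hb1 hb2
    exact le_liminf_of_le hb1.isCoboundedUnder_ge (Eventually.of_forall hd0)
  rw [tendsto_iff_dist_tendsto_zero]
  simp only [Real.dist_eq, hdiff]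
  exact hdt

lemma truncate (hZ : GoodVal Z) (P : Piece) {c ε : ℝ} (hc0 : 0 ≤ c) (hc : c ≤ Z P.u)
    (hε : 0 < ε) : ∃ Q : Piece, Q.L = P.L ∧ Q.A = P.A ∧ Z Q.u = c ∧
      ∀ x, 0 ≤ x → x ≤ P.L → |Q.f x - P.f x| ≤ ε := by
  have hiv := intermediate_value_Icc P.hL (hZ.cont P).continuousOn
  have hmem : c ∈ Set.Icc (Z (Fn 0 (max 0 (min 0 P.L)) P.f)) (Z (Fn 0 (max 0 (min P.L P.L)) P.f)) := by
    rw [min_eq_left P.hL, max_self, min_self, max_eq_right P.hL, hZ.point]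
    exact ⟨hc0, hc⟩
  obtain ⟨s, ⟨hs1, hs2⟩, hs⟩ := hiv hmem
  simp only [min_eq_left hs2, max_eq_right hs1] at hs
  obtain ⟨P1, P2, e1, e2, e3, e5, e4⟩ := P.split hs1 hs2
  obtain ⟨Q2, q1, q2, q3, q4⟩ := zero_approx' hZ P2 hε
  refine ⟨P1.concat Q2, ?_, ?_, ?_, ?_⟩
  · simp only [Piece.concat]; rw [e1, q1, e2]; ring
  · simp only [Piece.concat]; rw [q2, e3]
  · rw [hZ.concat, q3, add_zero, ← hs, Piece.u, e1, e5]
  · intro x h1 h2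
    have := concat_dist (P1 := P1) (P2 := P2) (Q1 := P1) (Q2 := Q2) (e1 := 0) (e2 := ε) rfl rfl
      (by simp) q4 x h1 (by rw [e1, e2]; linarith)
    rwa [e4, zero_add] at this

/-- Genuine upper semicontinuity along pieces. -/
lemma GoodVal.usc (hZ : GoodVal Z) {R : ℕ → Piece} {G : Piece} {V : ℝ}
    (hL : Tendsto (fun k => (R k).L) atTop (𝓝 G.L))
    (hV : ∀ k, (R k).A ≤ V) {e : ℕ → ℝ} (he : Tendsto e atTop (𝓝 0))
    (hfe : ∀ k x, 0 ≤ x → x ≤ (R k).L → |(R k).f x - G.f x| ≤ e k) {ε : ℝ} (hε : 0 < ε) :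
    ∀ᶠ k in atTop, Z (R k).u ≤ Z G.u + ε := by
  by_contra hcon
  rw [not_eventually] at hcon
  obtain ⟨φ, hφ, hφ2⟩ := extraction_of_frequently_atTop hcon
  have hG := hZ.nonneg G
  have h : ∀ k : ℕ, (0 : ℝ) < 1 / ((k : ℝ) + 1) := fun k => by positivity
  choose Q q1 q2 q3 q4 using fun k => truncate hZ (R (φ k)) (c := Z G.u + ε) (by linarith)
    (le_of_lt (not_le.1 (hφ2 k))) (h k)
  have ht : TauConv (fun k => (Q k).u) G.u := by
    refine tau_piece (V := V) (e := fun k => 1 / ((k : ℝ) + 1) + e (φ k)) ?_ ?_ ?_ ?_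
    · simp only [q1]; exact hL.comp hφ.tendsto_atTop
    · intro k; rw [q2]; exact hV _
    · simpa using tendsto_one_div_add_atTop_nhds_zero_nat.add (he.comp hφ.tendsto_atTop)
    · intro k x h1 h2
      rw [q1] at h2
      have e1 := q4 k x h1 h2
      have e2 := hfe (φ k) x h1 h2
      calc _ = |((Q k).f x - (R (φ k)).f x) + ((R (φ k)).f x - G.f x)| := by ring_nf
        _ ≤ _ := (abs_add_le _ _).trans (add_le_add e1 e2)
  have := hZ.husc _ _ ht
  simp only [q3] at this
  rw [limsup_const] at this
  linarith

/-! ### Piecewise quadratic functions -/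

/-- `f` is piecewise quadratic on `[a, b]`. -/
def PQ (a b : ℝ) (f : ℝ → ℝ) : Prop :=
  ∃ (ι : Type) (_ : Finite ι) (_ : Nonempty ι) (p q : ι → ℝ), (∀ i, p i ≤ q i) ∧
    Set.Icc a b = ⋃ i, Set.Icc (p i) (q i) ∧
    ∀ i, ∃ α β γ : ℝ, ∀ x ∈ Set.Icc (p i) (q i), f x = α * x ^ 2 + β * x + γ

lemma PQ.congr {a b : ℝ} {f g : ℝ → ℝ} (h : PQ a b f) (hfg : ∀ x, a ≤ x → x ≤ b → f x = g x) :
    PQ a b g := by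
  obtain ⟨ι, i1, i2, p, q, h1, h2, h3⟩ := h
  refine ⟨ι, i1, i2, p, q, h1, h2, fun i => ?_⟩
  obtain ⟨α, β, γ, h4⟩ := h3 i
  refine ⟨α, β, γ, fun x hx => ?_⟩
  have : x ∈ Set.Icc a b := by rw [h2]; exact Set.mem_iUnion.2 ⟨i, hx⟩
  rw [← hfg x this.1 this.2, h4 x hx]

lemma PQ.glue {a b c : ℝ} {f : ℝ → ℝ} (hac : a ≤ c) (hcb : c ≤ b) (h : PQ a c f)
    (h' : PQ c b f) : PQ a b f := by
  obtain ⟨ι, i1, i2, p, q, h1, h2, h3⟩ := h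
  obtain ⟨ι', i1', i2', p', q', h1', h2', h3'⟩ := h'
  refine ⟨ι ⊕ ι', inferInstance, inferInstance, Sum.elim p p', Sum.elim q q', ?_, ?_, ?_⟩
  · rintro (i | i)
    · exact h1 i
    · exact h1' i
  · rw [Set.iUnion_sum]
    simp only [Sum.elim_inl, Sum.elim_inr]
    rw [← h2, ← h2', Set.Icc_union_Icc_eq_Icc hac hcb]
  · rintro (i | i)
    · exact h3 i
    · exact h3' i

lemma PQ.affine {a b : ℝ} {f : ℝ → ℝ} (h : PQ a b f) (y k c : ℝ) :
    PQ (a + y) (b + y) (fun x => f (x - y) + k * x + c) := by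
  obtain ⟨ι, i1, i2, p, q, h1, h2, h3⟩ := h
  refine ⟨ι, i1, i2, fun i => p i + y, fun i => q i + y, fun i => by linarith [h1 i], ?_, ?_⟩
  · ext x
    have : x - y ∈ Set.Icc a b ↔ x - y ∈ ⋃ i, Set.Icc (p i) (q i) := by rw [h2]
    simp only [Set.mem_iUnion, Set.mem_Icc] at this ⊢
    simpa only [le_sub_iff_add_le, sub_le_iff_le_add] using this
  · intro i
    obtain ⟨α, β, γ, h4⟩ := h3 i
    refine ⟨α, β - 2 * α * y + k, γ + α * y ^ 2 - β * y + c, fun x hx => ?_⟩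
    beta_reduce at hx ⊢
    rw [h4 (x - y) ⟨by linarith [hx.1], by linarith [hx.2]⟩]
    ring

lemma PQ.isPLQ {a b : ℝ} {f : ℝ → ℝ} (h : PQ a b f) (hLC : IsLC (Fn a b f)) :
    IsPLQ (Fn a b f) := by
  obtain ⟨ι, i1, i2, p, q, h1, h2, h3⟩ := h
  obtain ⟨n, ⟨e⟩⟩ := Finite.exists_equiv_fin ι
  obtain ⟨l, rfl⟩ : ∃ l, n = l + 1 := by
    cases n with
    | zero => exact (Fin.elim0 (e (Classical.choice i2)))
    | succ l => exact ⟨l, rfl⟩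
  refine ⟨hLC, l, fun i => p (e.symm i), fun i => q (e.symm i), fun i => h1 _, ?_, fun i => ?_⟩
  · rw [edom_Fn, h2]
    exact (Equiv.iSup_comp (g := fun i => Set.Icc (p i) (q i)) e.symm).symm
  · obtain ⟨α, β, γ, h4⟩ := h3 (e.symm i)
    refine ⟨α, β, γ, fun x hx => ?_⟩
    have : x ∈ Set.Icc a b := by rw [h2]; exact Set.mem_iUnion.2 ⟨_, hx⟩
    rw [Fn_in f this.1 this.2, EReal.toReal_coe, h4 x hx]

/-- Piecewise quadratic pieces. -/
def Piece.PQ (P : Piece) : Prop := _root_.PQ 0 P.L P.f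

lemma PQ.single {a b : ℝ} {f : ℝ → ℝ} (hab : a ≤ b) (α β γ : ℝ)
    (h : ∀ x, f x = α * x ^ 2 + β * x + γ) : PQ a b f :=
  ⟨Unit, inferInstance, inferInstance, fun _ => a, fun _ => b, fun _ => hab,
    by rw [Set.iUnion_const], fun _ => ⟨α, β, γ, fun x _ => h x⟩⟩

lemma zeroPiece_PQ (L A : ℝ) (hL : 0 ≤ L) (hA : 0 ≤ A) : (zeroPiece L A hL hA).PQ :=
  PQ.single hL 0 0 0 (fun x => by simp [zeroPiece])

lemma quadPiece_PQ (t L : ℝ) (ht : 0 ≤ t) (hL : 0 ≤ L) : (quadPiece t L ht hL).PQ :=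
  PQ.single hL (t / 2) 0 0 (fun x => by simp [quadPiece]; ring)

lemma Piece.PQ.concat {P Q : Piece} (hP : P.PQ) (hQ : Q.PQ) : (P.concat Q).PQ := by
  refine _root_.PQ.glue (c := P.L) P.hL ?_ ?_ ?_
  · simp only [Piece.concat]; linarith [Q.hL]
  · exact _root_.PQ.congr hP fun x _ hx => (P.concat_left Q hx).symm
  · have h := _root_.PQ.affine hQ P.L P.A (P.f P.L - P.A * P.L)
    have e : (P.concat Q).L = Q.L + P.L := by simp only [Piece.concat]; ring
    rw [e]
    rw [zero_add] at h
    refine h.congr fun x hx _ => ?_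
    rw [P.concat_right Q hx]; ring

/-! ### Repetition -/

/-- `m`-fold repetition of a piece. -/
def Piece.rep (P : Piece) : ℕ → Piece
  | 0 => zeroPiece 0 0 le_rfl le_rfl
  | m + 1 => P.concat (P.rep m)

lemma Piece.rep_L (P : Piece) (m : ℕ) : (P.rep m).L = m * P.L := by
  induction m with
  | zero => simp [Piece.rep, zeroPiece]
  | succ m ih => 
    have : (P.rep (m + 1)).L = P.L + (P.rep m).L := rfl
    rw [this, ih]; push_cast; ring

lemma Piece.rep_A (P : Piece) (m : ℕ) : (P.rep m).A = m * P.A := by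
  induction m with
  | zero => simp [Piece.rep, zeroPiece]
  | succ m ih => 
    have : (P.rep (m + 1)).A = P.A + (P.rep m).A := rfl
    rw [this, ih]; push_cast; ring

lemma GoodVal.rep (hZ : GoodVal Z) (P : Piece) (m : ℕ) : Z (P.rep m).u = m * Z P.u := by
  induction m with
  | zero => simp [Piece.rep, hZ.zero]
  | succ m ih =>
    have : P.rep (m + 1) = P.concat (P.rep m) := rfl
    rw [this, hZ.concat, ih]; push_cast; ring

lemma Piece.rep_dist (P : Piece) {t : ℝ} (ht : 0 ≤ t) (htA : t * P.L = P.A) (m : ℕ) :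
    ∀ x, 0 ≤ x → x ≤ m * P.L → |(P.rep m).f x - t * x ^ 2 / 2| ≤ m * (P.A * P.L) := by
  have hb : ∀ x, 0 ≤ x → x ≤ P.L → |P.f x - t * x ^ 2 / 2| ≤ P.A * P.L := by
    intro x h1 h2
    have e1 := P.nonneg h1 h2
    have e2 := P.le h1 h2
    have e3 : 0 ≤ t * x ^ 2 := by positivity
    have e4 : t * x ^ 2 ≤ P.A * P.L := by
      rw [← htA, mul_assoc, ← sq]
      gcongr
    rw [abs_le]
    constructor <;> linarith
  induction m with
  | zero =>
    intro x h1 h2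
    have : x = 0 := by simp at h2; linarith
    subst this
    simp [Piece.rep, zeroPiece]
  | succ m ih =>
    intro x h1 h2
    have hr : P.rep (m + 1) = P.concat (P.rep m) := rfl
    have hAL := mul_nonneg P.hA P.hL
    push_cast at h2 ⊢
    rw [hr]
    rcases le_total x P.L with hx | hx
    · rw [Piece.concat_left _ _ hx]
      have := hb x h1 hx
      have : 0 ≤ m * (P.A * P.L) := by positivity
      linarith
    · rw [Piece.concat_right _ _ hx]
      have e1 := hb P.L P.hL le_rfl
      have e2 := ih (x - P.L) (by linarith) (by linarith)
      have e3 : t * x ^ 2 / 2 = t * P.L ^ 2 / 2 + P.A * (x - P.L) + t * (x - P.L) ^ 2 / 2 := by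
        rw [← htA]; ring
      rw [e3]
      rw [abs_le] at *
      constructor <;> linarith [e1.1, e1.2, e2.1, e2.2]

lemma GoodVal.quad (hZ : GoodVal Z) {t l : ℝ} (ht : 0 ≤ t) (hl : 0 ≤ l) (m : ℕ) :
    (m : ℝ) * Z (Fn 0 l (fun x => t * x ^ 2 / 2)) = Z (Fn 0 (m * l) (fun x => t * x ^ 2 / 2)) := by
  induction m with
  | zero => simp [hZ.point]
  | succ m ih =>
    have h1 := hZ.concat (quadPiece t l ht hl) (quadPiece t (m * l) ht (by positivity))
    have h2 : ((quadPiece t l ht hl).concat (quadPiece t (m * l) ht (by positivity))).u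
        = Fn 0 (((m + 1 : ℕ) : ℝ) * l) (fun x => t * x ^ 2 / 2) := by
      have : ((m + 1 : ℕ) : ℝ) * l
        = ((quadPiece t l ht hl).concat (quadPiece t (m * l) ht (by positivity))).L := by
        simp only [Piece.concat, quadPiece]; push_cast; ring
      rw [this]
      refine Fn_congr fun x _ _ => ?_
      rcases le_total x l with hx | hx
      · rw [Piece.concat_left _ _ (by exact hx)]; rfl
      · rw [Piece.concat_right _ _ (by exact hx)]
        simp only [quadPiece]; ring
    rw [← h2, h1]
    have h3 : (quadPiece t l ht hl).u = Fn 0 l (fun x => t * x ^ 2 / 2) := rfl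
    have h4 : (quadPiece t (m * l) ht (by positivity)).u
      = Fn 0 (m * l) (fun x => t * x ^ 2 / 2) := rfl
    rw [h3, h4, ← ih]
    push_cast; ring

/-- Small pieces are negligible. -/
lemma small_piece (hZ : GoodVal Z) {V ε : ℝ} (hε : 0 < ε) :
    ∃ η > 0, ∀ P : Piece, P.L < η → P.A ≤ V → Z P.u ≤ ε := by
  by_contra hcon
  push Not at hcon
  have h : ∀ k : ℕ, (0 : ℝ) < 1 / ((k : ℝ) + 1) := fun k => by positivity
  choose P p1 p2 p3 using fun k => hcon _ (h k)
  have hlim : Tendsto (fun k => (P k).L) atTop (𝓝 0) :=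
    squeeze_zero (fun k => (P k).hL) (fun k => (p1 k).le) tendsto_one_div_add_atTop_nhds_zero_nat
  have hV : 0 ≤ V := (P 0).hA.trans (p2 0)
  have := hZ.usc (R := P) (G := zeroPiece 0 0 le_rfl le_rfl) (V := V) hlim p2
    (e := fun k => V * (P k).L) (by simpa using hlim.const_mul V) ?_ hε
  · obtain ⟨k, hk⟩ := this.exists
    rw [hZ.zero] at hk
    linarith [p3 k]
  · intro k x h1 h2
    simp only [zeroPiece, sub_zero]
    rw [abs_of_nonneg ((P k).nonneg h1 h2)]
    exact ((P k).le h1 h2).trans (mul_le_mul_of_nonneg_right (p2 k) (P k).hL)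

/-- Local comparison with piecewise quadratic pieces. -/
lemma local_approx (hZ : GoodVal Z) {M ε : ℝ} (hε : 0 < ε) :
    ∃ δ > 0, ∀ p : Piece, p.L < δ → p.A ≤ M * p.L →
      ∃ q : Piece, q.L = p.L ∧ q.A = p.A ∧ q.PQ ∧ Z p.u ≤ Z q.u + ε * p.L := by
  by_contra hcon
  push Not at hcon
  have h : ∀ k : ℕ, (0 : ℝ) < 1 / ((k : ℝ) + 1) := fun k => by positivity
  choose p p1 p2 p3 using fun k => hcon _ (h k)
  have hLpos : ∀ k, 0 < (p k).L := by
    intro k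
    rcases eq_or_lt_of_le (p k).hL with h0 | h0
    · exfalso
      have := p3 k (zeroPiece (p k).L (p k).A (p k).hL (p k).hA) rfl rfl (zeroPiece_PQ _ _ _ _)
      rw [hZ.zero, Piece.u, ← h0, hZ.point] at this
      simp at this
    · exact h0
  have hL0 : Tendsto (fun k => (p k).L) atTop (𝓝 0) :=
    squeeze_zero (fun k => (p k).hL) (fun k => (p1 k).le) tendsto_one_div_add_atTop_nhds_zero_nat
  have htk : ∀ k, (p k).A / (p k).L ∈ Set.Icc 0 M := fun k =>
    ⟨div_nonneg (p k).hA (p k).hL, (div_le_iff₀ (hLpos k)).2 (p2 k)⟩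
  obtain ⟨t, ⟨ht0, htM⟩, φ, hφ, hφt⟩ := isCompact_Icc.tendsto_subseq htk
  have hM : 0 ≤ M := ht0.trans htM
  set P : ℕ → Piece := fun k => p (φ k) with hP
  set τ : ℕ → ℝ := fun k => (P k).A / (P k).L with hτ
  have hτt : Tendsto τ atTop (𝓝 t) := hφt
  have hτ0 : ∀ k, 0 ≤ τ k := fun k => (htk (φ k)).1
  have hPL : ∀ k, 0 < (P k).L := fun k => hLpos _
  have hPL0 : Tendsto (fun k => (P k).L) atTop (𝓝 0) := hL0.comp hφ.tendsto_atTop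
  have hτA : ∀ k, τ k * (P k).L = (P k).A := fun k => div_mul_cancel₀ _ (hPL k).ne'
  set m : ℕ → ℕ := fun k => ⌊1 / (P k).L⌋₊ with hm
  have hm1 : ∀ k, (m k : ℝ) * (P k).L ≤ 1 := by
    intro k
    have := Nat.floor_le (a := 1 / (P k).L) (by have := hPL k; positivity)
    rwa [le_div_iff₀ (hPL k)] at this
  have hm2 : ∀ k, 1 - (P k).L ≤ (m k : ℝ) * (P k).L := by
    intro k
    have := (Nat.lt_floor_add_one (1 / (P k).L)).le
    rw [div_le_iff₀ (hPL k)] at this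
    simp only [hm]
    linarith
  have hmlim : Tendsto (fun k => (m k : ℝ) * (P k).L) atTop (𝓝 1) := by
    refine tendsto_of_tendsto_of_tendsto_of_le_of_le ?_ tendsto_const_nhds hm2 hm1
    simpa using hPL0.const_sub 1
  have husc := hZ.usc (R := fun k => (P k).rep (m k)) (G := quadPiece t 1 ht0 zero_le_one) (V := M)
    (e := fun k => M * (P k).L + |τ k - t|) (ε := ε / 8) ?_ ?_ ?_ ?_ (by positivity)
  rotate_left
  · simp only [Piece.rep_L]; exact hmlim
  · intro k
    rw [Piece.rep_A]
    have e1 := p2 (φ k)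
    have e2 := hm1 k
    calc (m k : ℝ) * (P k).A ≤ m k * (M * (P k).L) := by gcongr
      _ = M * (m k * (P k).L) := by ring
      _ ≤ M * 1 := by gcongr
      _ = M := mul_one M
  · have e1 : Tendsto (fun k => |τ k - t|) atTop (𝓝 0) := by
      simpa using (hτt.sub_const t).abs
    simpa using (hPL0.const_mul M).add e1
  · intro k x h1 h2
    rw [Piece.rep_L] at h2
    have e1 := (P k).rep_dist (hτ0 k) (hτA k) (m k) x h1 h2
    have e2 : (m k : ℝ) * ((P k).A * (P k).L) ≤ M * (P k).L := by
      calc (m k : ℝ) * ((P k).A * (P k).L) = (P k).A * (m k * (P k).L) := by ring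
        _ ≤ (P k).A * 1 := mul_le_mul_of_nonneg_left (hm1 k) (P k).hA
        _ ≤ M * (P k).L := by rw [mul_one]; exact p2 _
    have hx1 : x ≤ 1 := h2.trans (hm1 k)
    have e3 : |τ k * x ^ 2 / 2 - t * x ^ 2 / 2| ≤ |τ k - t| := by
      have : τ k * x ^ 2 / 2 - t * x ^ 2 / 2 = (τ k - t) * (x ^ 2 / 2) := by ring
      rw [this, abs_mul, abs_of_nonneg (by positivity : (0 : ℝ) ≤ x ^ 2 / 2)]
      have : x ^ 2 / 2 ≤ 1 := by nlinarith
      exact mul_le_of_le_one_right (abs_nonneg _) this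
    calc |((P k).rep (m k)).f x - t * x ^ 2 / 2|
        = |(((P k).rep (m k)).f x - τ k * x ^ 2 / 2) + (τ k * x ^ 2 / 2 - t * x ^ 2 / 2)| := by
          ring_nf
      _ ≤ _ := (abs_add_le _ _).trans (add_le_add (e1.trans e2) e3)
  -- the competitor
  obtain ⟨c, hc0, hc1, hct, hclim⟩ : ∃ c : ℕ → ℝ, (∀ k, 0 ≤ c k) ∧ (∀ k, c k ≤ 1) ∧
      (∀ k, t * c k ≤ τ k) ∧ Tendsto c atTop (𝓝 1) := by
    rcases eq_or_lt_of_le ht0 with h0 | h0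
    · refine ⟨fun _ => 1, fun _ => zero_le_one, fun _ => le_rfl, fun k => ?_, tendsto_const_nhds⟩
      rw [← h0]; simpa using hτ0 k
    · refine ⟨fun k => min 1 (τ k / t), fun k => le_min zero_le_one (div_nonneg (hτ0 k) ht0),
        fun k => min_le_left _ _, fun k => ?_, ?_⟩
      · calc t * min 1 (τ k / t) ≤ t * (τ k / t) :=
              mul_le_mul_of_nonneg_left (min_le_right _ _) ht0
          _ = τ k := by field_simp
      · have := (tendsto_const_nhds (x := (1 : ℝ))).min (hτt.div_const t)
        rwa [div_self h0.ne', min_self] at this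
  have hcomp : ∀ k, Z (Fn 0 (c k * (P k).L) (fun x => t * x ^ 2 / 2)) + ε * (P k).L
      < Z (P k).u := by
    intro k
    have hl : 0 ≤ c k * (P k).L := mul_nonneg (hc0 k) (hPL k).le
    have hl2 : 0 ≤ (P k).L - c k * (P k).L := by nlinarith [hc1 k, hPL k]
    have hA2 : 0 ≤ (P k).A - t * (c k * (P k).L) := by
      rw [← hτA k]; nlinarith [hct k, hPL k]
    have := p3 (φ k) ((quadPiece t _ ht0 hl).concat (zeroPiece _ _ hl2 hA2)) ?_ ?_ ?_
    · rw [hZ.concat, hZ.zero, add_zero] at this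
      exact this
    · simp only [Piece.concat, quadPiece, zeroPiece, hP]; ring
    · simp only [Piece.concat, quadPiece, zeroPiece, hP]; ring
    · exact (quadPiece_PQ _ _ _ _).concat (zeroPiece_PQ _ _ _ _)
  have hcont := (hZ.cont (quadPiece t 1 ht0 zero_le_one)).tendsto 1
  have hslim : Tendsto (fun k => c k * ((m k : ℝ) * (P k).L)) atTop (𝓝 1) := by
    simpa using hclim.mul hmlim
  have hlow := hcont.comp hslim
  have hs : ∀ k, max 0 (min (c k * ((m k : ℝ) * (P k).L)) 1) = m k * (c k * (P k).L) := by
    intro k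
    have e0 : 0 ≤ (m k : ℝ) * (P k).L := mul_nonneg (Nat.cast_nonneg _) (hPL k).le
    rw [min_eq_left, max_eq_right]
    · ring
    · exact mul_nonneg (hc0 k) e0
    · nlinarith [hc0 k, hc1 k, hm1 k]
  have hlow' : Tendsto (fun k => (m k : ℝ) * Z (Fn 0 (c k * (P k).L) (fun x => t * x ^ 2 / 2)))
      atTop (𝓝 (Z (quadPiece t 1 ht0 zero_le_one).u)) := by
    have e1 : ∀ k, (m k : ℝ) * Z (Fn 0 (c k * (P k).L) (fun x => t * x ^ 2 / 2))
        = Z (Fn 0 (max 0 (min (c k * ((m k : ℝ) * (P k).L)) 1)) (fun x => t * x ^ 2 / 2)) := by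
      intro k
      rw [hs k, hZ.quad ht0 (mul_nonneg (hc0 k) (hPL k).le)]
    simp only [e1]
    have e2 : max 0 (min 1 (quadPiece t 1 ht0 zero_le_one).L) = 1 := by simp [quadPiece]
    rw [e2] at hlow
    exact hlow
  have ev1 := hlow'.eventually (lt_mem_nhds (sub_lt_self _ (by positivity : (0 : ℝ) < ε / 8)))
  have ev2 := hmlim.eventually (lt_mem_nhds (by norm_num : (1 / 2 : ℝ) < 1))
  obtain ⟨k, k1, k2, k3⟩ := (husc.and (ev1.and ev2)).exists
  rw [hZ.rep] at k1
  have k4 := mul_le_mul_of_nonneg_left (hcomp k).le (Nat.cast_nonneg (α := ℝ) (m k))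
  nlinarith

/-- Global comparison. -/
lemma global_approx (hZ : GoodVal Z) {M ε h δ : ℝ} (hε : 0 < ε) (hh : 0 ≤ h) (hhδ : h < δ)
    (hδ : ∀ p : Piece, p.L < δ → p.A ≤ M * p.L →
      ∃ q : Piece, q.L = p.L ∧ q.A = p.A ∧ q.PQ ∧ Z p.u ≤ Z q.u + ε * p.L) (N : ℕ) :
    ∀ P : Piece, P.L = N * h → ∃ Q B : Piece, Q.L = P.L ∧ Q.A = P.A ∧ Q.PQ ∧
      (∀ x, 0 ≤ x → x ≤ P.L → |Q.f x - P.f x| ≤ h * P.A) ∧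
      M * B.L ≤ B.A ∧ B.A ≤ P.A ∧ Z P.u ≤ Z Q.u + Z B.u + ε * P.L := by
  induction N with
  | zero =>
    intro P hP
    refine ⟨zeroPiece P.L P.A P.hL P.hA, zeroPiece 0 0 le_rfl le_rfl, rfl, rfl,
      zeroPiece_PQ _ _ _ _, fun x h1 h2 => ?_, ?_, P.hA, ?_⟩
    · have hx : x = 0 := by rw [hP] at h2; simp at h2; linarith
      subst hx
      simp only [zeroPiece, P.h0, sub_self, abs_zero]
      exact mul_nonneg hh P.hA
    · simp [zeroPiece]
    · have : P.L = 0 := by simpa using hP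
      rw [hZ.zero, hZ.zero, Piece.u, this, hZ.point]; simp
  | succ N ih =>
    intro P hP
    push_cast at hP
    obtain ⟨P1, P2, e1, e2, e3, -, e4⟩ := P.split hh (by nlinarith [Nat.cast_nonneg (α := ℝ) N])
    obtain ⟨Q2, B2, q1, q2, q3, q4, q5, q6, q7⟩ := ih P2 (by rw [e2, hP]; ring)
    have hZP : Z P.u = Z P1.u + Z P2.u := by
      rw [← hZ.concat]
      congr 1
      refine (Piece.u_congr ?_ fun x _ _ => e4 x).symm
      simp only [Piece.concat]; rw [e1, e2]; ring
    have hLL : P.L = P1.L + P2.L := by rw [e1, e2]; ring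
    have hdist : ∀ Q1 : Piece, Q1.L = P1.L → Q1.A = P1.A →
        ∀ x, 0 ≤ x → x ≤ P.L → |(Q1.concat Q2).f x - P.f x| ≤ h * P.A := by
      intro Q1 a1 a2 x h1 h2
      have := concat_dist (P1 := P1) (P2 := P2) (Q1 := Q1) (Q2 := Q2)
        (e1 := h * P1.A) (e2 := h * P2.A) a1 a2 ?_ q4 x h1 (by rw [e1, e2]; linarith)
      · rw [e4] at this
        rw [← e3]; linarith
      · intro y h3 h4
        have b1 := P1.nonneg h3 h4
        have b2 := P1.le h3 h4
        have b3 := Q1.nonneg h3 (h4.trans a1.ge)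
        have b4 := Q1.le h3 (h4.trans a1.ge)
        rw [a1, a2] at b4
        rw [e1] at b2 b4
        rw [abs_le]; constructor <;> linarith
    by_cases hgood : P1.A ≤ M * P1.L
    · obtain ⟨Q1, a1, a2, a3, a4⟩ := hδ P1 (by rw [e1]; exact hhδ) hgood
      refine ⟨Q1.concat Q2, B2, ?_, ?_, a3.concat q3, hdist Q1 a1 a2, q5, ?_, ?_⟩
      · simp only [Piece.concat]; rw [a1, q1, hLL]
      · simp only [Piece.concat]; rw [a2, q2, e3]
      · linarith [P1.hA]
      · rw [hZ.concat, hZP, hLL]; linarith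
    · refine ⟨(zeroPiece P1.L P1.A P1.hL P1.hA).concat Q2, P1.concat B2, ?_, ?_,
        (zeroPiece_PQ _ _ _ _).concat q3, hdist _ rfl rfl, ?_, ?_, ?_⟩
      · simp only [Piece.concat, zeroPiece]; rw [q1, hLL]
      · simp only [Piece.concat, zeroPiece]; rw [q2, e3]
      · simp only [Piece.concat]; linarith
      · simp only [Piece.concat]; linarith
      · rw [hZ.concat, hZ.concat, hZ.zero, hZP, hLL]
        have := mul_nonneg hε.le P1.hL
        linarith

lemma main_approx (hZ : GoodVal Z) (P : Piece) {ε : ℝ} (hε : 0 < ε) :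
    ∃ Q : Piece, Q.L = P.L ∧ Q.A = P.A ∧ Q.PQ ∧
      (∀ x, 0 ≤ x → x ≤ P.L → |Q.f x - P.f x| ≤ ε) ∧ Z P.u ≤ Z Q.u + ε := by
  have hLp : 0 < P.L + 1 := by linarith [P.hL]
  set ε' := ε / 2 / (P.L + 1) with hε'
  have hε'0 : 0 < ε' := by positivity
  obtain ⟨η, hη, hB⟩ := small_piece hZ (V := P.A) (half_pos hε)
  set M := P.A / η + 1 with hM
  have hMpos : 0 < M := by have := P.hA; positivity
  obtain ⟨δ, hδ, hG⟩ := local_approx hZ (M := M) hε'0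
  obtain ⟨N, hN⟩ := exists_nat_gt (max (P.L * P.A / ε) (P.L / δ))
  have hN1 := (le_max_left _ _).trans_lt hN
  have hN2 := (le_max_right _ _).trans_lt hN
  have hN0 : (0 : ℝ) < N := lt_of_le_of_lt (div_nonneg P.hL hδ.le) hN2
  obtain ⟨Q, B, q1, q2, q3, q4, q5, q6, q7⟩ := global_approx hZ (h := P.L / N) hε'0
    (div_nonneg P.hL hN0.le) (by rw [div_lt_iff₀ hN0]; rw [div_lt_iff₀ hδ] at hN2; linarith)
    hG N P (by field_simp)
  refine ⟨Q, q1, q2, q3, fun x h1 h2 => (q4 x h1 h2).trans ?_, ?_⟩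
  · rw [div_lt_iff₀ hε] at hN1
    rw [div_mul_eq_mul_div, div_le_iff₀ hN0]
    linarith
  · have hBL : B.L < η := by
      have e1 : M * η = P.A + η := by rw [hM]; field_simp
      by_contra hc
      push Not at hc
      nlinarith [mul_le_mul_of_nonneg_left hc hMpos.le]
    have e1 := hB B hBL q6
    have e2 : ε' * P.L ≤ ε / 2 := by
      rw [hε', div_mul_eq_mul_div, div_le_iff₀ hLp]
      nlinarith
    linarith

end Val

/-! ### Representation of elements of `LC` -/

lemma LC_repr {u : ℝ → EReal} (hu : IsLC u) : ∃ (a b M : ℝ) (f : ℝ → ℝ), a ≤ b ∧ 0 ≤ M ∧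
    HasSub a b (-M) M f ∧ Continuous f ∧ u = Fn a b f := by
  obtain ⟨hconv, hlsc, hbot, ⟨x0, hx0⟩, hcomp, M, hM, hlip⟩ := hu
  have hne : (edom u).Nonempty := ⟨x0, lt_top_iff_ne_top.2 hx0⟩
  set r : ℝ → ℝ := fun x => (u x).toReal with hr
  have hur : ∀ x ∈ edom u, u x = (r x : ℝ) := fun x hx =>
    (EReal.coe_toReal (ne_of_lt hx) (hbot x)).symm
  have hcvx : Convex ℝ (edom u) := by
    rw [convex_iff_forall_pos]
    intro x hx y hy s t hs ht hst
    have h1 := hconv x y s hs (by linarith)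
    have h2 : 1 - s = t := by linarith
    rw [h2, hur x hx, hur y hy, ← EReal.coe_mul, ← EReal.coe_mul, ← EReal.coe_add] at h1
    exact lt_of_le_of_lt h1 (EReal.coe_lt_top _)
  have hdom := eq_Icc_of_connected_compact ⟨hne, hcvx.isPreconnected⟩ hcomp
  set a := sInf (edom u) with ha
  set b := sSup (edom u) with hb
  have hab : a ≤ b := by
    rw [hdom] at hne
    exact Set.nonempty_Icc.1 hne
  have hur' : ∀ x, a ≤ x → x ≤ b → u x = (r x : ℝ) := fun x h1 h2 =>
    hur x (by rw [hdom]; exact ⟨h1, h2⟩)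
  have hrc : ∀ x y t, a ≤ x → x ≤ b → a ≤ y → y ≤ b → 0 < t → t < 1 →
      r (t * x + (1 - t) * y) ≤ t * r x + (1 - t) * r y := by
    intro x y t h1 h2 h3 h4 h5 h6
    have h := hconv x y t h5 h6
    have h7 : 0 < 1 - t := by linarith
    rw [hur' x h1 h2, hur' y h3 h4, smul_eq_mul, smul_eq_mul,
      hur' _ (by nlinarith) (by nlinarith), ← EReal.coe_mul, ← EReal.coe_mul,
      ← EReal.coe_add, EReal.coe_le_coe_iff] at h
    exact h
  have hint : ∀ x y, a < x → x < b → a < y → y < b → |r x - r y| ≤ M * |x - y| := by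
    intro x y h1 h2 h3 h4
    refine hlip x ?_ y ?_ <;> rw [hdom, interior_Icc]
    · exact ⟨h1, h2⟩
    · exact ⟨h3, h4⟩
  have hhalf : ∀ x y, a ≤ x → x ≤ b → a < y → y < b → |r x - r y| ≤ M * |x - y| := by
    intro x y h1 h2 h3 h4
    have hup : r x ≤ r y + M * |x - y| := by
      by_contra hc
      push Not at hc
      have hev := hlsc x ((r y + M * |x - y| : ℝ) : EReal)
        (by show ((r y + M * |x - y| : ℝ) : EReal) < u x; rw [hur' x h1 h2]; exact EReal.coe_lt_coe_iff.2 hc)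
      have hpath : Tendsto (fun s : ℝ => x + s * (y - x)) (𝓝[>] 0) (𝓝 x) := by
        have : Tendsto (fun s : ℝ => x + s * (y - x)) (𝓝 0) (𝓝 (x + 0 * (y - x))) :=
          Continuous.tendsto (by fun_prop) 0
        rw [zero_mul, add_zero] at this
        exact this.mono_left nhdsWithin_le_nhds
      have hsmall : ∀ᶠ s : ℝ in 𝓝[>] 0, s ∈ Set.Ioo (0 : ℝ) 1 := Ioo_mem_nhdsGT one_pos
      obtain ⟨s, hs1, hs2, hs3⟩ := ((hpath.eventually hev).and hsmall).exists
      have z1 : a < x + s * (y - x) := by nlinarith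
      have z2 : x + s * (y - x) < b := by nlinarith
      change ((r y + M * |x - y| : ℝ) : EReal) < u (x + s * (y - x)) at hs1
      rw [hur' _ z1.le z2.le, EReal.coe_lt_coe_iff] at hs1
      have h5 := (abs_le.1 (hint _ y z1 z2 h3 h4)).2
      have h6 : |x + s * (y - x) - y| ≤ |x - y| := by
        have : x + s * (y - x) - y = (1 - s) * (x - y) := by ring
        rw [this, abs_mul, abs_of_pos (by linarith)]
        nlinarith [abs_nonneg (x - y)]
      nlinarith
    have hlow : r y - M * |x - y| ≤ r x := by
      have h5 := hrc x y (1 / 2) h1 h2 h3.le h4.le (by norm_num) (by norm_num)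
      have h6 := (abs_le.1 (hint y (1 / 2 * x + (1 - 1 / 2) * y) h3 h4 (by linarith)
        (by linarith))).2
      have h7 : |y - (1 / 2 * x + (1 - 1 / 2) * y)| = |x - y| / 2 := by
        have : y - (1 / 2 * x + (1 - 1 / 2) * y) = -((x - y) / 2) := by ring
        rw [this, abs_neg, abs_div]; norm_num
      rw [h7] at h6
      linarith
    rw [abs_le]; constructor <;> linarith
  have hord : ∀ x y, a ≤ x → x < y → y ≤ b → |r x - r y| ≤ M * (y - x) := by
    intro x y h1 h2 h3
    have e1 := hhalf x ((x + y) / 2) h1 (by linarith) (by linarith) (by linarith)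
    have e2 := hhalf y ((x + y) / 2) (by linarith) h3 (by linarith) (by linarith)
    rw [abs_of_nonpos (by linarith : x - (x + y) / 2 ≤ 0)] at e1
    rw [abs_of_nonneg (by linarith : 0 ≤ y - (x + y) / 2)] at e2
    rw [abs_le] at *
    constructor <;> linarith [e1.1, e1.2, e2.1, e2.2]
  have hcont : ContinuousOn r (Set.Icc a b) := by
    refine (LipschitzOnWith.of_dist_le_mul (K := ⟨M, hM.le⟩) ?_).continuousOn
    intro x hx y hy
    rw [Real.dist_eq, Real.dist_eq]
    show |r x - r y| ≤ M * |x - y|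
    rcases lt_trichotomy x y with h | h | h
    · have := hord x y hx.1 h hy.2
      rwa [abs_sub_comm x y, abs_of_pos (sub_pos.2 h)]
    · subst h; simp
    · have := hord y x hy.1 h hx.2
      rwa [abs_sub_comm, abs_of_pos (sub_pos.2 h)]
  have hclamp : ∀ x, a ≤ x → x ≤ b → r (max a (min x b)) = r x := by
    intro x h1 h2
    rw [min_eq_left h2, max_eq_right h1]
  refine ⟨a, b, M, fun x => r (max a (min x b)), hab, hM.le, ?_, ?_, ?_⟩
  · intro x h1 h2
    set S : Set ℝ := insert (-M) ((fun y => (r x - r y) / (x - y)) '' Set.Ico a x) with hS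
    have hub : M ∈ upperBounds S := by
      rintro s (rfl | ⟨y, ⟨hy1, hy2⟩, rfl⟩)
      · linarith
      · beta_reduce
        rw [div_le_iff₀ (by linarith)]
        have := (abs_le.1 (hord y x hy1 hy2 h2)).1
        linarith
    have hSne : S.Nonempty := ⟨-M, Set.mem_insert _ _⟩
    refine ⟨sSup S, le_csSup ⟨M, hub⟩ (Set.mem_insert _ _), csSup_le hSne hub, fun y h3 h4 => ?_⟩
    beta_reduce
    rw [hclamp x h1 h2, hclamp y h3 h4]
    rcases lt_trichotomy y x with h | h | h
    · have := le_csSup ⟨M, hub⟩ (Set.mem_insert_of_mem (-M)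
        (Set.mem_image_of_mem (fun y => (r x - r y) / (x - y)) ⟨h3, h⟩))
      beta_reduce at this
      rw [div_le_iff₀ (by linarith)] at this
      linarith
    · subst h; simp
    · have : sSup S ≤ (r y - r x) / (y - x) := by
        refine csSup_le hSne ?_
        rintro s (rfl | ⟨z, ⟨hz1, hz2⟩, rfl⟩)
        · rw [le_div_iff₀ (by linarith)]
          have := (abs_le.1 (hord x y h1 h h4)).2
          linarith
        · beta_reduce
          have hyz : 0 < y - z := by linarith
          have hc := hrc z y ((y - x) / (y - z)) hz1 (by linarith) h3 h4
            (div_pos (by linarith) hyz) (by rw [div_lt_one hyz]; linarith)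
          have e1 : (y - x) / (y - z) * z + (1 - (y - x) / (y - z)) * y = x := by
            field_simp; ring
          rw [e1] at hc
          have e2 : (y - x) / (y - z) * r z + (1 - (y - x) / (y - z)) * r y
              = ((y - x) * r z + (x - z) * r y) / (y - z) := by
            field_simp; ring
          rw [e2, le_div_iff₀ hyz] at hc
          rw [div_le_div_iff₀ (by linarith) (by linarith)]
          nlinarith
      rw [le_div_iff₀ (by linarith)] at this
      linarith
  · exact hcont.comp_continuous (by fun_prop)
      (fun x => ⟨le_max_left _ _, max_le hab (min_le_right _ _)⟩)
  · funext x
    by_cases hx : a ≤ x ∧ x ≤ b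
    · rw [Fn_in _ hx.1 hx.2, hclamp x hx.1 hx.2, hur' x hx.1 hx.2]
    · rw [Fn_out _ hx]
      by_contra hc
      have : x ∈ edom u := lt_top_iff_ne_top.2 hc
      rw [hdom] at this
      exact hx this

lemma exists_seq {Z : (ℝ → EReal) → ℝ} (hZ : GoodVal Z) {u : ℝ → EReal} (hu : IsLC u) :
    ∃ v : ℕ → ℝ → EReal, (∀ k, IsPLQ (v k)) ∧ TauConv v u ∧
        Z u = limsup (fun k => Z (v k)) atTop := by
  obtain ⟨a, b, M, f, hab, hM, hsub, hf, rfl⟩ := LC_repr hu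
  obtain ⟨P, hPL, hPA, hPf, hPZ⟩ := exists_piece hsub hab (by linarith) hf
  have h : ∀ k : ℕ, (0 : ℝ) < 1 / ((k : ℝ) + 1) := fun k => by positivity
  choose Q q1 q2 q3 q4 q5 using fun k => main_approx hZ P (h k)
  have hlim := tendsto_one_div_add_atTop_nhds_zero_nat (𝕜 := ℝ)
  set g : ℕ → ℝ → ℝ := fun k x => (Q k).f (x - a) + (-M) * x + (f a + M * a) with hg
  have hL : ∀ k, (Q k).L + a = b := fun k => by rw [q1, hPL]; ring
  have hgs : ∀ k, HasSub a b (-M) M (g k) := by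
    intro k
    have := (Q k).hs.affine a (-M) (f a + M * a)
    rw [hL, zero_add] at this
    exact this.mono le_rfl le_rfl (by linarith) (by rw [q2, hPA]; linarith)
  have hgc : ∀ k, Continuous (g k) := by
    intro k
    have := (Q k).hf
    simp only [hg]
    fun_prop
  have hgZ : ∀ k, Z (Fn a b (g k)) = Z (Q k).u := by
    intro k
    have := hZ.affine (Q k).hs (Q k).hf (Q k).hL a (-M) (f a + M * a)
    rw [hL, zero_add] at this
    exact this
  refine ⟨fun k => Fn a b (g k), fun k => ?_, ?_, ?_⟩
  · have := PQ.affine (q3 k) a (-M) (f a + M * a)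
    rw [hL, zero_add] at this
    exact this.isPLQ ((hgs k).isLC hab (hgc k))
  · refine tau_of (fun _ => hab) tendsto_const_nhds tendsto_const_nhds hf hlim ?_
      (fun k => (hgs k).isLC hab (hgc k)) hu (M := M) (fun k => (hgs k).lip le_rfl le_rfl)
    intro k x h1 h2
    have := q4 k (x - a) (by linarith) (by rw [hPL]; linarith)
    rw [hPf, sub_add_cancel] at this
    simp only [hg]
    convert this using 2
    ring
  · have ht : Tendsto (fun k => Z (Q k).u) atTop (𝓝 (Z P.u)) := by
      rw [tendsto_order]
      constructor
      · intro c hc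
        filter_upwards [hlim.eventually (gt_mem_nhds (sub_pos.2 hc))] with k hk
        have := q5 k
        linarith
      · intro c hc
        have hd : 0 < (c - Z P.u) / 2 := by linarith
        have := hZ.usc (R := Q) (G := P) (V := P.A) (by simp only [q1]; exact tendsto_const_nhds)
          (fun k => (q2 k).le) hlim
          (fun k x h1 h2 => q4 k x h1 (h2.trans (q1 k).le)) hd
        filter_upwards [this] with k hk
        linarith
    simp only [hgZ]
    rw [ht.limsup_eq, hPZ hZ]

/-- Let `Z` be a simple, τ-upper semicontinuous, translation and dually
epi-translation invariant valuation on `LC(ℝ)` vanishing on indicators of closed intervals.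
Then `Z(u) = sup { limsup_n Z(v_n) : v_n ∈ PLQ(ℝ), v_n τ-converges to u }` for every
`u ∈ LC(ℝ)`. -/
theorem stmt17 (Z : (ℝ → EReal) → ℝ)
    (hval : IsVal Z) (husc : TauUSC Z) (htrans : TransInv Z) (hdual : DualTransInv Z)
    (hsimple : ∀ u : ℝ → EReal, IsLC u → (∃ x : ℝ, edom u = {x}) → Z u = 0)
    (hvanish : ∀ a b : ℝ, a ≤ b → Z (eIndicator (Set.Icc a b)) = 0) :
    ∀ u : ℝ → EReal, IsLC u →
      Z u = sSup {c : ℝ | ∃ v : ℕ → ℝ → EReal, (∀ k, IsPLQ (v k)) ∧ TauConv v u ∧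
        c = limsup (fun k => Z (v k)) atTop} := by
  have hZ : GoodVal Z := ⟨hval, husc, htrans, hdual, hsimple, hvanish⟩
  intro u hu
  symm
  refine IsGreatest.csSup_eq ⟨exists_seq hZ hu, ?_⟩
  rintro c ⟨v, -, hv, rfl⟩
  exact husc v u hv

end
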